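/- Let (F, q_F) be an object of _W Set^{(𝒱I)ᵒᵖ} (a presheaf on 𝒱I with a natural surjection from Hom_{𝒱I}(−,W)), write φ := q_F(id_W), and let δ : V → W and ε : U → W be injective linear maps. Then the element (ε↑δ)^* ι_{δ(V)+ε(U)}^* φ ∈ F(V⊕_{ν,μ}U) satisfies ι_V^*((ε↑δ)^* ι_{δ(V)+ε(U)}^* φ) = δ^*φ and ι_U^*((ε↑δ)^* ι_{δ(V)+ε(U)}^* φ) = ε^*φ; hence it lies in σ_{(V,δ^*φ)}F(U) and is sent by ρ_{F,(V,δ^*φ)} to ε^*φ. In particular, ρ_{F,(V,δ^*φ)} is surjective. -/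

import Mathlib

set_option maxHeartbeats 1000000

namespace Paper

/-- A finite-dimensional vector space over `𝔽_p = ZMod p`: an object of the
categories `𝒱^f` and `𝒱I`. -/
structure FDVec (p : ℕ) [Fact p.Prime] : Type 1 where
  carrier : Type
  [addCommGroup' : AddCommGroup carrier]
  [module' : Module (ZMod p) carrier]
  [finiteDimensional' : FiniteDimensional (ZMod p) carrier]

attribute [instance] FDVec.addCommGroup' FDVec.module' FDVec.finiteDimensional'

instance (p : ℕ) [Fact p.Prime] : CoeSort (FDVec p) Type := ⟨FDVec.carrier⟩

abbrev FDVec.of (p : ℕ) [Fact p.Prime] (X : Type) [AddCommGroup X] [Module (ZMod p) X]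
    [FiniteDimensional (ZMod p) X] : FDVec p := ⟨X⟩

variable {p : ℕ} [Fact p.Prime]

/-- The object of `𝒱I` determined by a subspace. -/
abbrev subFD {W : FDVec p} (U : Submodule (ZMod p) W) : FDVec p := FDVec.of p U

theorem comp_injective {A B C : Type} [AddCommGroup A] [Module (ZMod p) A]
    [AddCommGroup B] [Module (ZMod p) B] [AddCommGroup C] [Module (ZMod p) C]
    (f : A →ₗ[ZMod p] B) (g : B →ₗ[ZMod p] C)
    (hf : Function.Injective f) (hg : Function.Injective g) :
    Function.Injective (g ∘ₗ f) := fun _ _ h => hf (hg h)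

theorem linearMap_id_injective (V : Type) [AddCommGroup V] [Module (ZMod p) V] :
    Function.Injective (LinearMap.id : V →ₗ[ZMod p] V) := fun _ _ h => h

theorem equiv_toLinearMap_injective {A B : Type} [AddCommGroup A] [Module (ZMod p) A]
    [AddCommGroup B] [Module (ZMod p) B] (e : A ≃ₗ[ZMod p] B) :
    Function.Injective (e.toLinearMap : A →ₗ[ZMod p] B) := e.injective

/-- A presheaf on the category `𝒱I` of finite-dimensional `𝔽_p`-vector spaces
and injective linear maps: a contravariant functor to `Set`. -/
structure VIPresheaf (p : ℕ) [Fact p.Prime] where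
  obj : FDVec p → Type
  map : ∀ {V W : FDVec p} (f : V →ₗ[ZMod p] W), Function.Injective f → obj W → obj V
  map_id : ∀ (V : FDVec p) (h : Function.Injective (LinearMap.id : V →ₗ[ZMod p] V))
      (x : obj V), map LinearMap.id h x = x
  map_comp : ∀ {V W X : FDVec p} (f : V →ₗ[ZMod p] W) (hf : Function.Injective f)
      (g : W →ₗ[ZMod p] X) (hg : Function.Injective g)
      (hgf : Function.Injective (g ∘ₗ f)) (x : obj X),
      map (g ∘ₗ f) hgf x = map f hf (map g hg x)

/-- A groupoid whose objects are the pairs `(U, i)` with `U` a subspace of `W i`,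
and whose morphisms are linear isomorphisms between such subspaces. -/
structure SubGroupoid {ι : Type} (W : ι → FDVec p) where
  mor : ∀ (i j : ι) (U : Submodule (ZMod p) (W i)) (U' : Submodule (ZMod p) (W j)),
    Set (↥U ≃ₗ[ZMod p] ↥U')
  id_mem : ∀ i U, LinearEquiv.refl (ZMod p) ↥U ∈ mor i i U U
  comp_mem : ∀ (i j k : ι) (U : Submodule (ZMod p) (W i)) (U' : Submodule (ZMod p) (W j))
      (U'' : Submodule (ZMod p) (W k)) (α : ↥U ≃ₗ[ZMod p] ↥U')
      (β : ↥U' ≃ₗ[ZMod p] ↥U''),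
      α ∈ mor i j U U' → β ∈ mor j k U' U'' → (α.trans β) ∈ mor i k U U''
  inv_mem : ∀ (i j : ι) (U : Submodule (ZMod p) (W i)) (U' : Submodule (ZMod p) (W j))
      (α : ↥U ≃ₗ[ZMod p] ↥U'),
      α ∈ mor i j U U' → α.symm ∈ mor j i U' U

section Restriction

variable {Wi Wj : FDVec p} {U : Submodule (ZMod p) Wi} {U' : Submodule (ZMod p) Wj}

/-- The restriction of `α : U ≃ U'` to a subspace `M ≤ U`, as a map to the ambient space. -/
def restrictMap (α : ↥U ≃ₗ[ZMod p] ↥U') {M : Submodule (ZMod p) Wi}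
    (hMU : M ≤ U) : ↥M →ₗ[ZMod p] Wj :=
  U'.subtype ∘ₗ (α.toLinearMap) ∘ₗ (Submodule.inclusion hMU)

theorem restrictMap_injective (α : ↥U ≃ₗ[ZMod p] ↥U')
    {M : Submodule (ZMod p) Wi} (hMU : M ≤ U) :
    Function.Injective (restrictMap α hMU) := by
  intro a b hab
  have h1 : α (Submodule.inclusion hMU a) = α (Submodule.inclusion hMU b) := Subtype.ext hab
  have h2 := α.injective h1
  have h3 := congrArg Subtype.val h2
  exact Subtype.ext h3

/-- The image `α(M)` of a subspace `M ≤ U` under `α : U ≃ U'`. -/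
def restrictImg (α : ↥U ≃ₗ[ZMod p] ↥U') {M : Submodule (ZMod p) Wi}
    (hMU : M ≤ U) : Submodule (ZMod p) Wj :=
  LinearMap.range (restrictMap α hMU)

/-- The restriction-corestriction `α_M : M ≃ α(M)` of `α : U ≃ U'` to `M ≤ U`. -/
noncomputable def restrictEquiv (α : ↥U ≃ₗ[ZMod p] ↥U')
    {M : Submodule (ZMod p) Wi} (hMU : M ≤ U) :
    ↥M ≃ₗ[ZMod p] ↥(restrictImg α hMU) :=
  LinearEquiv.ofInjective _ (restrictMap_injective α hMU)

end Restriction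

/-- The restriction property of a groupoid on subspaces. -/
def SubGroupoid.HasRestriction {ι : Type} {W : ι → FDVec p} (G : SubGroupoid W) : Prop :=
  ∀ (i j : ι) (U : Submodule (ZMod p) (W i)) (U' : Submodule (ZMod p) (W j))
    (α : ↥U ≃ₗ[ZMod p] ↥U'), α ∈ G.mor i j U U' →
    ∀ (M : Submodule (ZMod p) (W i)) (hMU : M ≤ U),
      restrictEquiv α hMU ∈ G.mor i j M (restrictImg α hMU)

/-- An element of `⊔_{i} Hom_{𝒱I}(V, W i)`. -/
def InjHom (V : FDVec p) {ι : Type} (W : ι → FDVec p) : Type :=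
  Σ i : ι, {f : V →ₗ[ZMod p] W i // Function.Injective f}

/-- The relation `∼_𝒢` on `⊔_i Hom_{𝒱I}(V, W i)`. -/
def SubGroupoid.Rel {ι : Type} {W : ι → FDVec p} (G : SubGroupoid W) (V : FDVec p)
    (x y : InjHom V W) : Prop :=
  ∃ α ∈ G.mor x.1 y.1 (LinearMap.range x.2.1) (LinearMap.range y.2.1),
    ∀ v : V, ((α (x.2.1.rangeRestrict v) : ↥(LinearMap.range y.2.1)) : W y.1) = y.2.1 v

/-- A generating family of a presheaf `F` on `𝒱I`: a natural surjection
`q : ⊔_i Hom_{𝒱I}(−, W i) → F`. -/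
structure GenFamily {ι : Type} (W : ι → FDVec p) (F : VIPresheaf p) where
  q : ∀ (V : FDVec p) (i : ι) (f : V →ₗ[ZMod p] W i), Function.Injective f → F.obj V
  natural : ∀ (T V : FDVec p) (β : T →ₗ[ZMod p] V) (hβ : Function.Injective β)
      (i : ι) (f : V →ₗ[ZMod p] W i) (hf : Function.Injective f)
      (hfβ : Function.Injective (f ∘ₗ β)),
      q T i (f ∘ₗ β) hfβ = F.map β hβ (q V i f hf)
  surjective : ∀ (V : FDVec p) (x : F.obj V), ∃ i f hf, q V i f hf = x

/-- `φ_i = q(id_{W i})`. -/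
def GenFamily.phi {ι : Type} {W : ι → FDVec p} {F : VIPresheaf p} (Q : GenFamily W F)
    (i : ι) : F.obj (W i) :=
  Q.q (W i) i LinearMap.id (linearMap_id_injective _)

/-- The morphisms of the groupoid `𝒢_{(F,q)}`: isomorphisms `α : U ≃ U'` with
`α^* ι_{U'}^* φ_j = ι_U^* φ_i`. -/
def GenFamily.mor {ι : Type} {W : ι → FDVec p} {F : VIPresheaf p} (Q : GenFamily W F)
    (i j : ι) (U : Submodule (ZMod p) (W i)) (U' : Submodule (ZMod p) (W j)) :
    Set (↥U ≃ₗ[ZMod p] ↥U') :=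
  {α | F.map (V := subFD U) (W := subFD U') α.toLinearMap (equiv_toLinearMap_injective α)
        (F.map (V := subFD U') (W := W j) U'.subtype U'.injective_subtype (Q.phi j))
      = F.map (V := subFD U) (W := W i) U.subtype U.injective_subtype (Q.phi i)}

/-- The relation `∼_{𝒢_{(F,q)}}`. -/
def GenFamily.GRel {ι : Type} {W : ι → FDVec p} {F : VIPresheaf p} (Q : GenFamily W F)
    (V : FDVec p) (x y : InjHom V W) : Prop :=
  ∃ α ∈ Q.mor x.1 y.1 (LinearMap.range x.2.1) (LinearMap.range y.2.1),
    ∀ v : V, ((α (x.2.1.rangeRestrict v) : ↥(LinearMap.range y.2.1)) : W y.1) = y.2.1 v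

/-- `x ∈ F_i(V)`, where `F_i ⊆ F` is the image of `Hom_{𝒱I}(−, W i)` under `q`. -/
def GenFamily.memComponent {ι : Type} {W : ι → FDVec p} {F : VIPresheaf p}
    (Q : GenFamily W F) (i : ι) (V : FDVec p) (x : F.obj V) : Prop :=
  ∃ f hf, Q.q V i f hf = x

/-- Minimality of a generating family: `F_i ⊄ F_j` for `i ≠ j`. -/
def GenFamily.Minimal {ι : Type} {W : ι → FDVec p} {F : VIPresheaf p}
    (Q : GenFamily W F) : Prop :=
  ∀ i j : ι, i ≠ j →
    ¬ (∀ (V : FDVec p) (x : F.obj V), Q.memComponent i V x → Q.memComponent j V x)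

/-- A class in `𝐁(V, W)`, represented canonically by its "glue" subspace
`G = {(ν m, −ω m) : m ∈ M} ⊆ V × W`.  The two conditions express the injectivity
of `ν` and of `ω` respectively. -/
structure Corr (p : ℕ) [Fact p.Prime] (V W : FDVec p) where
  carrier : Submodule (ZMod p) (↥V × ↥W)
  inj_left : ∀ m ∈ carrier, Prod.fst m = 0 → m = 0
  inj_right : ∀ m ∈ carrier, Prod.snd m = 0 → m = 0

/-- The pushout `V ⊕_{ν,ω} W` of a class of `𝐁(V,W)`. -/
abbrev Corr.po {V W : FDVec p} (c : Corr p V W) : FDVec p :=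
  FDVec.of p ((↥V × ↥W) ⧸ c.carrier)

/-- The canonical injection `ι_V : V → V ⊕_{ν,ω} W`. -/
def Corr.inl {V W : FDVec p} (c : Corr p V W) : V →ₗ[ZMod p] c.po :=
  c.carrier.mkQ ∘ₗ LinearMap.inl (ZMod p) ↥V ↥W

/-- The canonical injection `ι_W : W → V ⊕_{ν,ω} W`. -/
def Corr.inr {V W : FDVec p} (c : Corr p V W) : W →ₗ[ZMod p] c.po :=
  c.carrier.mkQ ∘ₗ LinearMap.inr (ZMod p) ↥V ↥W

theorem Corr.inl_injective {V W : FDVec p} (c : Corr p V W) :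
    Function.Injective c.inl := by
  intro a b hab
  have h : (Submodule.Quotient.mk ((a, 0) : ↥V × ↥W) : (↥V × ↥W) ⧸ c.carrier)
      = Submodule.Quotient.mk (b, 0) := hab
  have hmem : ((a, 0) : ↥V × ↥W) - (b, 0) ∈ c.carrier := by
    rwa [Submodule.Quotient.eq] at h
  have h2 := c.inj_right _ hmem (by simp)
  have h3 := congrArg Prod.fst h2
  simpa [sub_eq_zero] using h3

theorem Corr.inr_injective {V W : FDVec p} (c : Corr p V W) :
    Function.Injective c.inr := by
  intro a b hab
  have h : (Submodule.Quotient.mk ((0, a) : ↥V × ↥W) : (↥V × ↥W) ⧸ c.carrier)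
      = Submodule.Quotient.mk (0, b) := hab
  have hmem : ((0, a) : ↥V × ↥W) - (0, b) ∈ c.carrier := by
    rwa [Submodule.Quotient.eq] at h
  have h2 := c.inj_left _ hmem (by simp)
  have h3 := congrArg Prod.snd h2
  simpa [sub_eq_zero] using h3

/-- The fibre `σ_{(V,x)}F(W)` of `σ_V F(W) = ⊔_{𝐁(V,W)} F(V ⊕_{ν,ω} W)` over `x ∈ F(V)`. -/
def CentralFib (F : VIPresheaf p) (V : FDVec p) (x : F.obj V) (W : FDVec p) : Type :=
  Σ c : Corr p V W,
    {b : F.obj c.po // F.map (V := V) (W := c.po) c.inl c.inl_injective b = x}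

/-- The map `ρ_{F,(V,x)} : σ_{(V,x)}F(W) → F(W)`, sending `b` to `ι_W^* b`. -/
def centralMap (F : VIPresheaf p) (V : FDVec p) (x : F.obj V) (W : FDVec p) :
    CentralFib F V x W → F.obj W :=
  fun s => F.map (V := W) (W := Sigma.fst s |>.po) s.1.inr s.1.inr_injective s.2.1

/-- `(V, x)` is central for `F` if `ρ_{F,(V,x)}` is an isomorphism of presheaves. -/
def VIPresheaf.IsCentral (F : VIPresheaf p) (V : FDVec p) (x : F.obj V) : Prop :=
  ∀ W : FDVec p, Function.Bijective (centralMap F V x W)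

/-- The class of `𝐁(V, U)` associated with a pair of injections `δ : V → W`, `ε : U → W`:
its glue subspace is `ker(δ + ε) ⊆ V × U`. -/
def kerCorr {V U W : FDVec p} (δ : V →ₗ[ZMod p] W) (ε : U →ₗ[ZMod p] W)
    (hδ : Function.Injective δ) (hε : Function.Injective ε) : Corr p V U where
  carrier := LinearMap.ker (δ.coprod ε)
  inj_left := by
    intro m hm h1
    have hk : δ m.1 + ε m.2 = 0 := by simpa [LinearMap.mem_ker] using hm
    rw [h1] at hk
    simp only [map_zero, zero_add] at hk
    have h2 : m.2 = 0 := hε (by simpa using hk)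
    exact Prod.ext h1 h2
  inj_right := by
    intro m hm h2
    have hk : δ m.1 + ε m.2 = 0 := by simpa [LinearMap.mem_ker] using hm
    rw [h2] at hk
    simp only [map_zero, add_zero] at hk
    have h1 : m.1 = 0 := hδ (by simpa using hk)
    exact Prod.ext h1 h2

/-- The isomorphism `ε ↑ δ : V ⊕_{ν,μ} U ≃ δ(V) + ε(U)` of the first isomorphism theorem. -/
noncomputable def upArrow {V U W : FDVec p} (δ : V →ₗ[ZMod p] W) (ε : U →ₗ[ZMod p] W) :
    ((↥V × ↥U) ⧸ LinearMap.ker (δ.coprod ε)) ≃ₗ[ZMod p]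
      ↥(LinearMap.range δ ⊔ LinearMap.range ε : Submodule (ZMod p) W) :=
  (δ.coprod ε).quotKerEquivRange ≪≫ₗ LinearEquiv.ofEq _ _ (LinearMap.range_coprod δ ε)

/-- The class `[T, id_T, α] ∈ 𝐁(V, T)` associated with an injection `α : T → V`. -/
def idCorr {V T : FDVec p} (α : T →ₗ[ZMod p] V) (hα : Function.Injective α) :
    Corr p V T where
  carrier := LinearMap.range (α.prod (-(LinearMap.id : T →ₗ[ZMod p] T)))
  inj_left := by
    rintro m ⟨t, rfl⟩ h1
    simp only [LinearMap.prod_apply, Pi.prod, LinearMap.neg_apply, LinearMap.id_apply] at h1 ⊢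
    have ht : t = 0 := hα (by simpa using h1)
    simp [ht]
  inj_right := by
    rintro m ⟨t, rfl⟩ h2
    simp only [LinearMap.prod_apply, Pi.prod, LinearMap.neg_apply, LinearMap.id_apply] at h2 ⊢
    have ht : t = 0 := by simpa [neg_eq_zero] using h2
    simp [ht]

/-! The composite of `ε↑δ` with the inclusion of `δ(V) + ε(U)` is the map `V ⊕_{ν,μ} U → W` that
`δ + ε` induces on the quotient, so precomposing it with `ι_V` and `ι_U` gives back `δ` and `ε`.
Hence, by functoriality, pulling any `x ∈ F(W)` back to `V ⊕_{ν,μ} U` produces an element over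
`δ^*x` which `ρ` sends to `ε^*x`.  By Yoneda every element of `F(U)` is `ε^*φ` for some `ε`. -/

section UpArrow

variable {V U W : FDVec p} (δ : V →ₗ[ZMod p] W) (ε : U →ₗ[ZMod p] W)

theorem subtype_comp_upArrow_comp_mkQ :
    (LinearMap.range δ ⊔ LinearMap.range ε).subtype ∘ₗ (upArrow δ ε).toLinearMap ∘ₗ
      (LinearMap.ker (δ.coprod ε)).mkQ = δ.coprod ε :=
  rfl

variable (hδ : Function.Injective δ) (hε : Function.Injective ε)

theorem subtype_comp_upArrow_comp_inl :
    (LinearMap.range δ ⊔ LinearMap.range ε).subtype ∘ₗ (upArrow δ ε).toLinearMap ∘ₗ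
      (kerCorr δ ε hδ hε).inl = δ :=
  (congrArg (· ∘ₗ LinearMap.inl (ZMod p) V U) (subtype_comp_upArrow_comp_mkQ δ ε)).trans
    (LinearMap.coprod_inl δ ε)

theorem subtype_comp_upArrow_comp_inr :
    (LinearMap.range δ ⊔ LinearMap.range ε).subtype ∘ₗ (upArrow δ ε).toLinearMap ∘ₗ
      (kerCorr δ ε hδ hε).inr = ε :=
  (congrArg (· ∘ₗ LinearMap.inr (ZMod p) V U) (subtype_comp_upArrow_comp_mkQ δ ε)).trans
    (LinearMap.coprod_inr δ ε)

end UpArrow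

namespace VIPresheaf

variable (F : VIPresheaf p)

theorem map_map_of_comp_eq {V W X : FDVec p} {f : V →ₗ[ZMod p] W} {g : W →ₗ[ZMod p] X}
    {h : V →ₗ[ZMod p] X} (hgf : g ∘ₗ f = h) (hf : Function.Injective f)
    (hg : Function.Injective g) (hh : Function.Injective h) (x : F.obj X) :
    F.map f hf (F.map g hg x) = F.map h hh x := by
  subst hgf
  exact (F.map_comp f hf g hg hh x).symm

variable {V U W : FDVec p} {δ : V →ₗ[ZMod p] W} {ε : U →ₗ[ZMod p] W}
  (hδ : Function.Injective δ) (hε : Function.Injective ε) (x : F.obj W)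

/-- The element `(ε↑δ)^* ι_{δ(V)+ε(U)}^* x` of `F(V ⊕_{ν,μ} U)`, which amalgamates `δ^*x` and
`ε^*x`. -/
noncomputable def glue : F.obj (kerCorr δ ε hδ hε).po :=
  F.map (upArrow δ ε).toLinearMap (equiv_toLinearMap_injective _)
    (F.map (V := subFD (LinearMap.range δ ⊔ LinearMap.range ε)) (W := W)
      (LinearMap.range δ ⊔ LinearMap.range ε).subtype (Submodule.injective_subtype _) x)

theorem map_glue_of_comp_eq {T : FDVec p} {i : T →ₗ[ZMod p] (kerCorr δ ε hδ hε).po}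
    {f : T →ₗ[ZMod p] W}
    (h : (LinearMap.range δ ⊔ LinearMap.range ε).subtype ∘ₗ (upArrow δ ε).toLinearMap ∘ₗ i = f)
    (hi : Function.Injective i) (hf : Function.Injective f) :
    F.map i hi (F.glue hδ hε x) = F.map f hf x :=
  (F.map_map_of_comp_eq rfl hi _ (comp_injective i _ hi (upArrow δ ε).injective) _).trans
    (F.map_map_of_comp_eq h _ _ hf x)

theorem map_inl_glue :
    F.map (kerCorr δ ε hδ hε).inl (kerCorr δ ε hδ hε).inl_injective (F.glue hδ hε x)
      = F.map δ hδ x :=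
  F.map_glue_of_comp_eq hδ hε x (subtype_comp_upArrow_comp_inl δ ε hδ hε) _ hδ

theorem map_inr_glue :
    F.map (kerCorr δ ε hδ hε).inr (kerCorr δ ε hδ hε).inr_injective (F.glue hδ hε x)
      = F.map ε hε x :=
  F.map_glue_of_comp_eq hδ hε x (subtype_comp_upArrow_comp_inr δ ε hδ hε) _ hε

/-- `glue` as an element of the fibre `σ_{(V,δ^*x)}F(U)`, used as a preimage of `ε^*x` under
`ρ_{F,(V,δ^*x)}`. -/
noncomputable def glueFib : CentralFib F V (F.map δ hδ x) U :=
  ⟨kerCorr δ ε hδ hε, F.glue hδ hε x, F.map_inl_glue hδ hε x⟩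

theorem centralMap_glueFib :
    centralMap F V (F.map δ hδ x) U (F.glueFib hδ hε x) = F.map ε hε x :=
  F.map_inr_glue hδ hε x

variable {x} in
theorem centralMap_surjective
    (hx : ∀ y : F.obj U, ∃ (ε : U →ₗ[ZMod p] W) (hε : Function.Injective ε), F.map ε hε x = y) :
    Function.Surjective (centralMap F V (F.map δ hδ x) U) := by
  intro y
  obtain ⟨ε, hε, rfl⟩ := hx y
  exact ⟨F.glueFib hδ hε x, F.centralMap_glueFib hδ hε x⟩

end VIPresheaf

namespace GenFamily

variable {ι : Type} {W : ι → FDVec p} {F : VIPresheaf p} (Q : GenFamily W F)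

theorem q_eq_map_phi {V : FDVec p} {i : ι} (f : V →ₗ[ZMod p] W i)
    (hf : Function.Injective f) : Q.q V i f hf = F.map f hf (Q.phi i) :=
  Q.natural V (W i) f hf i LinearMap.id (linearMap_id_injective _) hf

theorem exists_map_phi_eq {V : FDVec p} (y : F.obj V) :
    ∃ (i : ι) (f : V →ₗ[ZMod p] W i) (hf : Function.Injective f), F.map f hf (Q.phi i) = y := by
  obtain ⟨i, f, hf, rfl⟩ := Q.surjective V y
  exact ⟨i, f, hf, (Q.q_eq_map_phi f hf).symm⟩

end GenFamily

/-- **Statement 12.** Let `(F, q_F)` be an object of `_W Set^{(𝒱I)ᵒᵖ}` with `φ = q_F(id_W)`,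
and let `δ : V → W`, `ε : U → W` be injective.  Then `b := (ε↑δ)^* ι_{δ(V)+ε(U)}^* φ`
satisfies `ι_V^* b = δ^* φ` and `ι_U^* b = ε^* φ`; hence it lies in `σ_{(V,δ^*φ)}F(U)`
and is sent by `ρ_{F,(V,δ^*φ)}` to `ε^* φ`.  In particular `ρ_{F,(V,δ^*φ)}` is surjective. -/
theorem statement_12 {p : ℕ} [Fact p.Prime] (W : FDVec p) (F : VIPresheaf p)
    (Q : GenFamily (fun _ : PUnit => W) F)
    (V U : FDVec p) (δ : V →ₗ[ZMod p] W) (hδ : Function.Injective δ)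
    (ε : U →ₗ[ZMod p] W) (hε : Function.Injective ε)
    (b : F.obj (kerCorr δ ε hδ hε).po)
    (hb : b = F.map (upArrow δ ε).toLinearMap (equiv_toLinearMap_injective _)
        (F.map (V := subFD (LinearMap.range δ ⊔ LinearMap.range ε)) (W := W)
          (LinearMap.range δ ⊔ LinearMap.range ε).subtype
          (Submodule.injective_subtype _) (Q.phi PUnit.unit))) :
    ∃ hfib : F.map (kerCorr δ ε hδ hε).inl (kerCorr δ ε hδ hε).inl_injective b
        = F.map δ hδ (Q.phi PUnit.unit),
      F.map (kerCorr δ ε hδ hε).inr (kerCorr δ ε hδ hε).inr_injective b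
          = F.map ε hε (Q.phi PUnit.unit) ∧
      centralMap F V (F.map δ hδ (Q.phi PUnit.unit)) U ⟨kerCorr δ ε hδ hε, ⟨b, hfib⟩⟩
          = F.map ε hε (Q.phi PUnit.unit) ∧
      Function.Surjective (centralMap F V (F.map δ hδ (Q.phi PUnit.unit)) U) := by
  obtain rfl : b = F.glue hδ hε (Q.phi PUnit.unit) := hb
  refine ⟨F.map_inl_glue hδ hε _, F.map_inr_glue hδ hε _, F.centralMap_glueFib hδ hε _, ?_⟩
  refine F.centralMap_surjective hδ fun y => ?_
  obtain ⟨_, hy⟩ := Q.exists_map_phi_eq y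
  exact hy

end Paper
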